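/- Let R and S be associative unital rings, F a flat right R-module, Y an (R,S)-bimodule, and N a pure-injective right S-module. Then for every j ≥ 0 there is a natural isomorphism of abelian groups Ext^j_S(F ⊗_R Y, N) ≅ Hom_R(F, Ext^j_S(Y, N)). -/

import Mathlib

open CategoryTheory Opposite

noncomputable section

section Tensor

variable (T : Type) [Ring T]

/-- The defining relations of the balanced tensor product `P ⊗_T A` of a right `T`-module
`P` and a left `T`-module `A`, inside the abelian group `A ⊗_ℤ P`. -/
def balRel (P : Type) [AddCommGroup P] [Module Tᵐᵒᵖ P]
    (A : Type) [AddCommGroup A] [Module T A] : Submodule ℤ (TensorProduct ℤ A P) :=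
  Submodule.span ℤ {x | ∃ (t : T) (a : A) (p : P),
    x = (t • a) ⊗ₜ[ℤ] p - a ⊗ₜ[ℤ] (MulOpposite.op t • p)}

/-- The balanced tensor product `P ⊗_T A` (as an abelian group). -/
def Bal (P : Type) [AddCommGroup P] [Module Tᵐᵒᵖ P]
    (A : Type) [AddCommGroup A] [Module T A] : Type :=
  TensorProduct ℤ A P ⧸ balRel T P A

instance (P : Type) [AddCommGroup P] [Module Tᵐᵒᵖ P]
    (A : Type) [AddCommGroup A] [Module T A] : AddCommGroup (Bal T P A) :=
  inferInstanceAs (AddCommGroup (TensorProduct ℤ A P ⧸ balRel T P A))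

/-- Functoriality of `P ⊗_T -` in the left-module variable. -/
def balMapLeft (P : Type) [AddCommGroup P] [Module Tᵐᵒᵖ P]
    {A B : Type} [AddCommGroup A] [Module T A] [AddCommGroup B] [Module T B]
    (g : A →ₗ[T] B) : Bal T P A →ₗ[ℤ] Bal T P B :=
  Submodule.mapQ (balRel T P A) (balRel T P B)
    (TensorProduct.map g.toAddMonoidHom.toIntLinearMap LinearMap.id)
    (by
      rw [balRel, Submodule.span_le]
      rintro x ⟨t, a, p, rfl⟩
      change (TensorProduct.map g.toAddMonoidHom.toIntLinearMap LinearMap.id) _ ∈ balRel T P B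
      simp only [SetLike.mem_coe, Submodule.mem_comap, map_sub, TensorProduct.map_tmul,
        LinearMap.id_apply, AddMonoidHom.coe_toIntLinearMap, LinearMap.toAddMonoidHom_coe,
        g.map_smul]
      exact Submodule.subset_span ⟨t, g a, p, rfl⟩)

/-- Functoriality of `- ⊗_T A` in the right-module variable. -/
def balMapRight {P Q : Type} [AddCommGroup P] [Module Tᵐᵒᵖ P] [AddCommGroup Q] [Module Tᵐᵒᵖ Q]
    (A : Type) [AddCommGroup A] [Module T A]
    (i : P →ₗ[Tᵐᵒᵖ] Q) : Bal T P A →ₗ[ℤ] Bal T Q A :=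
  Submodule.mapQ (balRel T P A) (balRel T Q A)
    (TensorProduct.map LinearMap.id i.toAddMonoidHom.toIntLinearMap)
    (by
      rw [balRel, Submodule.span_le]
      rintro x ⟨t, a, p, rfl⟩
      change (TensorProduct.map LinearMap.id i.toAddMonoidHom.toIntLinearMap) _ ∈ balRel T Q A
      simp only [SetLike.mem_coe, Submodule.mem_comap, map_sub, TensorProduct.map_tmul,
        LinearMap.id_apply, AddMonoidHom.coe_toIntLinearMap, LinearMap.toAddMonoidHom_coe,
        i.map_smul]
      exact Submodule.subset_span ⟨t, a, i p, rfl⟩)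

/-- A right `T`-module `P` is flat if `P ⊗_T -` preserves injectivity. -/
def RightFlat (P : Type) [AddCommGroup P] [Module Tᵐᵒᵖ P] : Prop :=
  ∀ (A B : Type) [AddCommGroup A] [Module T A] [AddCommGroup B] [Module T B]
    (g : A →ₗ[T] B), Function.Injective g → Function.Injective (balMapLeft T P g)

/-- A map of right `T`-modules is a pure monomorphism if it is injective and remains
injective after tensoring with any left `T`-module. -/
def IsPureMonoRight {P Q : Type} [AddCommGroup P] [Module Tᵐᵒᵖ P] [AddCommGroup Q]
    [Module Tᵐᵒᵖ Q] (i : P →ₗ[Tᵐᵒᵖ] Q) : Prop :=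
  Function.Injective i ∧
    ∀ (A : Type) [AddCommGroup A] [Module T A], Function.Injective (balMapRight T A i)

/-- A right `T`-module `N` is pure-injective if it is injective with respect to pure
monomorphisms of right `T`-modules. -/
def PureInjectiveRight (N : Type) [AddCommGroup N] [Module Tᵐᵒᵖ N] : Prop :=
  ∀ (P Q : Type) [AddCommGroup P] [Module Tᵐᵒᵖ P] [AddCommGroup Q] [Module Tᵐᵒᵖ Q]
    (i : P →ₗ[Tᵐᵒᵖ] Q), IsPureMonoRight T i →
      ∀ g : P →ₗ[Tᵐᵒᵖ] N, ∃ h : Q →ₗ[Tᵐᵒᵖ] N, h.comp i = g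

end Tensor

section Stmt0

variable (R S : Type) [Ring R] [Ring S]
variable (F : Type) [AddCommGroup F] [Module Rᵐᵒᵖ F]
variable (Y : Type) [AddCommGroup Y] [Module R Y] [Module Sᵐᵒᵖ Y] [SMulCommClass R Sᵐᵒᵖ Y]
variable (N : Type) [AddCommGroup N] [Module Sᵐᵒᵖ N]

/-- The defining relations of `F ⊗_R Y`, as an `Sᵐᵒᵖ`-submodule of `Y ⊗_ℤ F`
(where `S` acts through `Y`). -/
def bimodRel : Submodule Sᵐᵒᵖ (TensorProduct ℤ Y F) :=
  Submodule.span Sᵐᵒᵖ {x | ∃ (r : R) (y : Y) (f : F),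
    x = (r • y) ⊗ₜ[ℤ] f - y ⊗ₜ[ℤ] (MulOpposite.op r • f)}

/-- The tensor product `F ⊗_R Y`, a right `S`-module. -/
def BimodTens : Type := TensorProduct ℤ Y F ⧸ bimodRel R S F Y

instance : AddCommGroup (BimodTens R S F Y) :=
  inferInstanceAs (AddCommGroup (TensorProduct ℤ Y F ⧸ bimodRel R S F Y))

instance : Module Sᵐᵒᵖ (BimodTens R S F Y) :=
  inferInstanceAs (Module Sᵐᵒᵖ (TensorProduct ℤ Y F ⧸ bimodRel R S F Y))

/-- The Ext-group `Ext^j_S(X, Z)` of right `S`-modules, as an abelian group. -/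
def extGrp (T : Type) [Ring T] (X Z : ModuleCat.{0} T) (j : ℕ) : ModuleCat.{0} ℤ :=
  ((_root_.Ext ℤ (ModuleCat.{0} T) j).obj (op X)).obj Z

/-- Left multiplication by `r : R` on the bimodule `Y`, as a map of right `S`-modules. -/
def rmulY (r : R) : Y →ₗ[Sᵐᵒᵖ] Y where
  toFun y := r • y
  map_add' := smul_add r
  map_smul' s y := smul_comm r s y

/-- The right `R`-action on `Ext^j_S(Y, N)` induced by the left `R`-action on `Y`:
`r` acts via the map induced by `y ↦ r • y`. -/
def extAct (j : ℕ) (r : R) :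
    ↥(extGrp Sᵐᵒᵖ (ModuleCat.of Sᵐᵒᵖ Y) (ModuleCat.of Sᵐᵒᵖ N) j) →+
      ↥(extGrp Sᵐᵒᵖ (ModuleCat.of Sᵐᵒᵖ Y) (ModuleCat.of Sᵐᵒᵖ N) j) :=
  AddMonoidHom.mk'
    (fun e => (((_root_.Ext ℤ (ModuleCat.{0} Sᵐᵒᵖ) j).map
      (ModuleCat.ofHom (rmulY R S Y r)).op).app (ModuleCat.of Sᵐᵒᵖ N)) e)
    (fun a b => LinearMap.map_add (((_root_.Ext ℤ (ModuleCat.{0} Sᵐᵒᵖ) j).map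
      (ModuleCat.ofHom (rmulY R S Y r)).op).app (ModuleCat.of Sᵐᵒᵖ N)).hom a b)

/-- The group `Hom_R(F, Ext^j_S(Y, N))` of maps of right `R`-modules, realized as the
subgroup of additive maps `F →+ Ext^j_S(Y, N)` compatible with the `R`-actions. -/
def homRExt (j : ℕ) :
    AddSubgroup (F →+ ↥(extGrp Sᵐᵒᵖ (ModuleCat.of Sᵐᵒᵖ Y) (ModuleCat.of Sᵐᵒᵖ N) j)) where
  carrier := {g | ∀ (r : R) (f : F),
    g (MulOpposite.op r • f) = extAct R S Y N j r (g f)}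
  add_mem' := by
    intro a b ha hb r f
    simp [ha r f, hb r f]
  zero_mem' := by
    intro r f
    simp
  neg_mem' := by
    intro a ha r f
    simp [ha r f]


section LinearEquivOfKer

variable {k A B C : Type*} [Ring k] [AddCommGroup A] [AddCommGroup B] [AddCommGroup C]
  [Module k A] [Module k B] [Module k C] (q : A →ₗ[k] B) (p : A →ₗ[k] C)
  (hq : Function.Surjective q) (hp : Function.Surjective p)
  (h : LinearMap.ker q = LinearMap.ker p)

/-- The isomorphism between two quotients of a module by the same kernel. -/
def linearEquivOfKerEq : B ≃ₗ[k] C :=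
  (q.quotKerEquivOfSurjective hq).symm.trans
    ((Submodule.quotEquivOfEq _ _ h).trans (p.quotKerEquivOfSurjective hp))

theorem linearEquivOfKerEq_apply (a : A) : linearEquivOfKerEq q p hq hp h (q a) = p a := by
  have hqa : (q.quotKerEquivOfSurjective hq).symm (q a) = Submodule.Quotient.mk a :=
    (LinearEquiv.symm_apply_eq _).2 rfl
  simp only [linearEquivOfKerEq, LinearEquiv.trans_apply, hqa]
  rfl

end LinearEquivOfKer

section ExtComparison

open HomologicalComplex

universe w v u

theorem homologyπ_eq_zero_iff {k : Type*} [Ring k] {ι : Type*} {c : ComplexShape ι}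
    (K : HomologicalComplex (ModuleCat.{v} k) c) (n : ι) (z : K.cycles n) :
    K.homologyπ n z = 0 ↔ ∃ x : K.X (c.prev n), K.d (c.prev n) n x = K.iCycles n z := by
  have hex := (ShortComplex.moduleCat_exact_iff _).1 (ShortComplex.exact_of_g_is_cokernel
    (ShortComplex.mk _ _ (K.toCycles_comp_homologyπ _ n)) (K.homologyIsCokernel _ n rfl))
  have hi : Function.Injective (K.iCycles n) := (ModuleCat.mono_iff_injective _).1 inferInstance
  have hd (x : K.X (c.prev n)) : K.iCycles n (K.toCycles _ n x) = K.d _ n x :=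
    congr($(K.toCycles_i _ n) x)
  refine ⟨fun hz => ?_, fun ⟨x, hx⟩ => ?_⟩
  · obtain ⟨x, rfl⟩ := hex z hz
    exact ⟨x, (hd x).symm⟩
  · rw [← hi ((hd x).trans hx)]
    exact congr($(K.toCycles_comp_homologyπ _ n) x)

theorem homologyUnop_hom_naturality {V ι : Type*} [Category* V] [Abelian V] {c : ComplexShape ι}
    {K L : HomologicalComplex Vᵒᵖ c} (φ : K ⟶ L) (i : ι) :
    homologyMap ((unopFunctor V c).map φ.op) i ≫ (K.homologyUnop i).hom =
      (L.homologyUnop i).hom ≫ (homologyMap φ i).unop :=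
  congr($(homologyOp_hom_naturality ((unopFunctor V c).map φ.op) i).unop).symm

variable {k : Type*} [Ring k] {C : Type u} [Category.{v} C] [Abelian C] [Linear k C]
variable {X X' : C} (P : ProjectiveResolution X) (Q : ProjectiveResolution X') (Z : C) (n : ℕ)

variable (k) {P Q} in
/-- The map of cochain complexes `Hom(Q, Z) ⟶ Hom(P, Z)` given by precomposition. -/
def linearYonedaObjMap (φ : P.complex ⟶ Q.complex) :
    Q.complex.linearYonedaObj k Z ⟶ P.complex.linearYonedaObj k Z :=
  (unopFunctor _ _).map ((((linearYoneda k C).obj Z).rightOp.mapHomologicalComplex _).map φ).op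

theorem d_comp_iCycles (z : (P.complex.linearYonedaObj k Z).cycles n) :
    P.complex.d (n + 1) n ≫ (P.complex.linearYonedaObj k Z).iCycles n z = 0 :=
  congr($((P.complex.linearYonedaObj k Z).iCycles_d n (n + 1)) z)

theorem exists_iCycles_eq (f : P.complex.X n ⟶ Z) (hf : P.complex.d (n + 1) n ≫ f = 0) :
    ∃ z, (P.complex.linearYonedaObj k Z).iCycles n z = f :=
  (ShortComplex.moduleCat_exact_iff _).1 (ShortComplex.exact_of_f_is_kernel
    (ShortComplex.mk _ _ ((P.complex.linearYonedaObj k Z).iCycles_d n (n + 1)))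
    ((P.complex.linearYonedaObj k Z).cyclesIsKernel n (n + 1) (by simp))) f hf

section DerivedFunctor

variable [EnoughProjectives C]

theorem isoExt_inv_naturality {f : X ⟶ X'} (φ : ProjectiveResolution.Hom P Q f) :
    homologyMap (linearYonedaObjMap k Z φ.hom) n ≫ (P.isoExt n Z).inv =
      (Q.isoExt n Z).inv ≫ ((Ext k C n).map f.op).app Z := by
  have hDerived := congr($(ProjectiveResolution.isoLeftDerivedObj_hom_naturality f P Q φ.hom
    (φ.hom_f_zero_comp_π_f_zero.trans (by simp)) ((linearYoneda k C).obj Z).rightOp n).unop)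
  have hUnop := homologyUnop_hom_naturality
    ((((linearYoneda k C).obj Z).rightOp.mapHomologicalComplex _).map φ.hom) n
  exact (Category.assoc _ _ _).symm.trans ((hUnop =≫ _).trans ((Category.assoc _ _ _).trans
    ((_ ≫= hDerived.symm).trans (Category.assoc _ _ _).symm)))

variable (k) in
/-- The class in `Ext k C n`, the derived functor, of an `n`-cocycle of `Hom(P, Z)`. -/
def cyclesToExt :
    ↥((P.complex.linearYonedaObj k Z).cycles n) →+ ↥(((Ext k C n).obj (op X)).obj Z) :=
  ((P.complex.linearYonedaObj k Z).homologyπ n ≫ (P.isoExt n Z).inv).hom.toAddMonoidHom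

theorem cyclesToExt_surjective : Function.Surjective (cyclesToExt k P Z n) :=
  (ModuleCat.epi_iff_surjective
    ((P.complex.linearYonedaObj k Z).homologyπ n ≫ (P.isoExt n Z).inv)).1 inferInstance

theorem cyclesToExt_eq_zero_iff (z : (P.complex.linearYonedaObj k Z).cycles n) :
    cyclesToExt k P Z n z = 0 ↔
      ∃ g : P.complex.X ((ComplexShape.up ℕ).prev n) ⟶ Z,
        P.complex.d n _ ≫ g = (P.complex.linearYonedaObj k Z).iCycles n z :=
  ((P.isoExt n Z).symm.toLinearEquiv.map_eq_zero_iff).trans (homologyπ_eq_zero_iff _ n z)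

variable {P Q} in
theorem map_cyclesToExt {f : X ⟶ X'} (φ : ProjectiveResolution.Hom P Q f)
    (z : (Q.complex.linearYonedaObj k Z).cycles n) :
    ((Ext k C n).map f.op).app Z (cyclesToExt k Q Z n z) =
      cyclesToExt k P Z n (cyclesMap (linearYonedaObjMap k Z φ.hom) n z) := by
  have h := homologyπ_naturality (linearYonedaObjMap k Z φ.hom) n =≫ (P.isoExt n Z).inv
  rw [Category.assoc, isoExt_inv_naturality, Category.assoc] at h
  exact congr($h z)

end DerivedFunctor

variable [HasExt.{w} C]

theorem extMk_eq_zero_iff_of_prev {n : ℕ} (f : P.complex.X n ⟶ Z)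
    (hf : P.complex.d (n + 1) n ≫ f = 0) :
    P.extMk f (n + 1) rfl hf = 0 ↔
      ∃ g : P.complex.X ((ComplexShape.up ℕ).prev n) ⟶ Z, P.complex.d n _ ≫ g = f := by
  rcases n with _ | n
  · have hd : P.complex.d 0 ((ComplexShape.up ℕ).prev 0) = 0 := P.complex.shape _ _ (by simp)
    have hg (g : P.cochainComplex.X 1 ⟶ Z) : g = 0 :=
      (P.cochainComplex.isZero_of_isStrictlyLE 0 1 (by lia)).eq_of_src _ _
    rw [← P.extEquivCohomologyClass.apply_eq_iff_eq, P.extEquivCohomologyClass_extMk,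
      P.extEquivCohomologyClass_zero, CochainComplex.HomComplex.CohomologyClass.mk_eq_zero_iff,
      CochainComplex.HomComplex.Cocycle.toSingleMk_mem_coboundaries_iff _ _ _ _ _ 1 (by lia)]
    simp only [hg, hd, Limits.comp_zero, Limits.zero_comp, exists_const]
    exact eq_comm.trans
      ((Preadditive.IsIso.comp_left_eq_zero (P.cochainComplexXIso (-(0 : ℕ)) 0 rfl).hom f).trans
        eq_comm)
  · have hn : (ComplexShape.up ℕ).prev (n + 1) = n := by simp
    rw [P.extMk_eq_zero_iff f _ rfl hf n rfl, hn]

variable (k) in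
/-- The class in the Yoneda group `Abelian.Ext X Z n` of an `n`-cocycle of `Hom(P, Z)`. -/
def cyclesToAbelianExt :
    ↥((P.complex.linearYonedaObj k Z).cycles n) →+ Abelian.Ext X Z n :=
  AddMonoidHom.mk' (fun z => P.extMk ((P.complex.linearYonedaObj k Z).iCycles n z) (n + 1) rfl
    (d_comp_iCycles P Z n z)) fun z z' => by
      simp only [map_add]
      exact (P.add_extMk _ _ _ _ _ _).symm

theorem cyclesToAbelianExt_surjective : Function.Surjective (cyclesToAbelianExt k P Z n) := by
  intro e
  obtain ⟨f, hf, rfl⟩ := P.extMk_surjective e (n + 1) rfl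
  obtain ⟨z, rfl⟩ := exists_iCycles_eq (k := k) P Z n f hf
  exact ⟨z, rfl⟩

variable {P Q} in
theorem mk₀_comp_cyclesToAbelianExt {f : X ⟶ X'} (φ : ProjectiveResolution.Hom P Q f)
    (z : (Q.complex.linearYonedaObj k Z).cycles n) :
    (Abelian.Ext.mk₀ f).comp (cyclesToAbelianExt k Q Z n z) (zero_add n) =
      cyclesToAbelianExt k P Z n (cyclesMap (linearYonedaObjMap k Z φ.hom) n z) := by
  have hi : φ.hom.f n ≫ (Q.complex.linearYonedaObj k Z).iCycles n z =
      (P.complex.linearYonedaObj k Z).iCycles n (cyclesMap (linearYonedaObjMap k Z φ.hom) n z) :=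
    congr($(cyclesMap_i (linearYonedaObjMap k Z φ.hom) n) z).symm
  refine (ProjectiveResolution.mk₀_comp_extMk _ _ rfl (d_comp_iCycles Q Z n z) φ).trans ?_
  simp only [hi]
  rfl

variable [EnoughProjectives C]

variable (k) in
theorem ker_cyclesToExt : LinearMap.ker (cyclesToExt k P Z n).toIntLinearMap =
    LinearMap.ker (cyclesToAbelianExt k P Z n).toIntLinearMap := by
  ext z
  exact (cyclesToExt_eq_zero_iff P Z n z).trans
    (extMk_eq_zero_iff_of_prev P Z _ (d_comp_iCycles P Z n z)).symm

variable (k) in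
/-- The comparison between `Ext` as a derived functor and the Yoneda group `Abelian.Ext`. -/
def extAddEquiv (X Z : C) (n : ℕ) : ↥(((Ext k C n).obj (op X)).obj Z) ≃+ Abelian.Ext X Z n :=
  (linearEquivOfKerEq _ _ (cyclesToExt_surjective (projectiveResolution X) Z n)
    (cyclesToAbelianExt_surjective _ Z n) (ker_cyclesToExt k _ Z n)).toAddEquiv

theorem extAddEquiv_naturality (f : X ⟶ X') (e : ((Ext k C n).obj (op X')).obj Z) :
    extAddEquiv k X Z n (((Ext k C n).map f.op).app Z e) =
      (Abelian.Ext.mk₀ f).comp (extAddEquiv k X' Z n e) (zero_add n) := by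
  let φ : ProjectiveResolution.Hom (projectiveResolution X) (projectiveResolution X') f :=
    { hom := ProjectiveResolution.lift f _ _
      hom_f_zero_comp_π_f_zero :=
        (ProjectiveResolution.lift_commutes_zero f _ _).trans (by simp) }
  obtain ⟨z, rfl⟩ := cyclesToExt_surjective (projectiveResolution X') Z n e
  rw [map_cyclesToExt Z n φ]
  have hX := linearEquivOfKerEq_apply _ _ (cyclesToExt_surjective (projectiveResolution X) Z n)
    (cyclesToAbelianExt_surjective _ Z n) (ker_cyclesToExt k _ Z n)
  have hX' := linearEquivOfKerEq_apply _ _ (cyclesToExt_surjective (projectiveResolution X') Z n)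
    (cyclesToAbelianExt_surjective _ Z n) (ker_cyclesToExt k _ Z n)
  exact (hX _).trans ((mk₀_comp_cyclesToAbelianExt Z n φ z).symm.trans
    (congrArg (fun e => (Abelian.Ext.mk₀ f).comp e (zero_add n)) (hX' z)).symm)

end ExtComparison

section CharacterModule

universe v

variable {T : Type*} [Ring T]

/-- The right action `(χ t)(a) = χ (t a)` on the characters of a left module. -/
instance characterModuleOfLeft (M : Type*) [AddCommGroup M] [Module T M] :
    Module Tᵐᵒᵖ (CharacterModule M) :=
  Module.compHom (R := Tᵈᵐᵃ) (M →+ AddCircle (1 : ℚ)) (RingHom.id Tᵐᵒᵖ)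

/-- The left action `(t χ)(p) = χ (p t)` on the characters of a right module. -/
instance characterModuleOfRight (M : Type*) [AddCommGroup M] [Module Tᵐᵒᵖ M] :
    Module T (CharacterModule M) :=
  Module.compHom (R := Tᵐᵒᵖᵈᵐᵃ) (M →+ AddCircle (1 : ℚ)) (RingEquiv.opOp T).toRingHom

variable {A B C : Type*} [AddCommGroup A] [Module T A] [AddCommGroup B] [Module T B]
  [AddCommGroup C] [Module T C] {P Q : Type*} [AddCommGroup P] [Module Tᵐᵒᵖ P]
  [AddCommGroup Q] [Module Tᵐᵒᵖ Q]

theorem exists_comp_eq_of_exact_of_baer {I : Type*} [AddCommGroup I] [Module T I]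
    (hI : Module.Baer T I) {u : A →ₗ[T] B} {v : B →ₗ[T] C} (huv : Function.Exact u v)
    (g : B →ₗ[T] I) (hg : g ∘ₗ u = 0) : ∃ h : C →ₗ[T] I, h ∘ₗ v = g := by
  have hker : LinearMap.ker v ≤ LinearMap.ker g := fun b hb => by
    obtain ⟨a, rfl⟩ := (huv b).1 hb
    exact congr($hg a)
  obtain ⟨h, hh⟩ := hI.extension_property ((LinearMap.ker v).liftQ v le_rfl)
    (LinearMap.ker_eq_bot.1 (Submodule.ker_liftQ_eq_bot _ _ _ le_rfl))
    ((LinearMap.ker v).liftQ g hker)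
  exact ⟨h, LinearMap.ext fun b => congr($hh (Submodule.Quotient.mk b))⟩

/-- The map of character modules induced by a map of left modules. -/
def characterMap (u : A →ₗ[T] B) : CharacterModule B →ₗ[Tᵐᵒᵖ] CharacterModule A where
  toFun χ := χ.comp u.toAddMonoidHom
  map_add' _ _ := rfl
  map_smul' t χ := by
    ext a
    exact congrArg χ (u.map_smul t.unop a).symm

/-- The map of character modules induced by a map of right modules. -/
def characterMapOfRight (u : P →ₗ[Tᵐᵒᵖ] Q) : CharacterModule Q →ₗ[T] CharacterModule P where
  toFun χ := χ.comp u.toAddMonoidHom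
  map_add' _ _ := rfl
  map_smul' t χ := by
    ext p
    exact congrArg χ (u.map_smul (MulOpposite.op t) p).symm

theorem characterMap_surjective {u : A →ₗ[T] B} (hu : Function.Injective u) :
    Function.Surjective (characterMap u) :=
  CharacterModule.dual_surjective_of_injective u.toAddMonoidHom.toIntLinearMap hu

theorem characterMapOfRight_surjective {u : P →ₗ[Tᵐᵒᵖ] Q} (hu : Function.Injective u) :
    Function.Surjective (characterMapOfRight u) :=
  CharacterModule.dual_surjective_of_injective u.toAddMonoidHom.toIntLinearMap hu

theorem characterMap_injective {u : A →ₗ[T] B} (hu : Function.Surjective u) :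
    Function.Injective (characterMap u) :=
  CharacterModule.dual_injective_of_surjective u.toAddMonoidHom.toIntLinearMap hu

theorem characterMap_exact {u : A →ₗ[T] B} {v : B →ₗ[T] C} (huv : Function.Exact u v) :
    Function.Exact (characterMap v) (characterMap u) := by
  intro χ
  refine ⟨fun hχ => ?_, ?_⟩
  · obtain ⟨ψ, hψ⟩ := exists_comp_eq_of_exact_of_baer (Module.Baer.of_divisible (AddCircle (1 : ℚ)))
      (u := u.toAddMonoidHom.toIntLinearMap) (v := v.toAddMonoidHom.toIntLinearMap) huv
      (AddMonoidHom.toIntLinearMap χ) (LinearMap.ext fun a => congr($hχ a))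
    exact ⟨ψ.toAddMonoidHom, DFunLike.ext _ _ fun b => congr($hψ b)⟩
  · rintro ⟨ψ, rfl⟩
    ext a
    exact (congrArg ψ (huv.apply_apply_eq_zero a)).trans (map_zero ψ)

/-- Currying: `Hom_T(P, A⋆) ≃ Hom_T(A, P⋆)`, for `P` a right and `A` a left `T`-module. -/
def characterFlip : (P →ₗ[Tᵐᵒᵖ] CharacterModule A) ≃ (A →ₗ[T] CharacterModule P) where
  toFun f :=
    { AddMonoidHom.flip (f.toAddMonoidHom : P →+ A →+ AddCircle (1 : ℚ)) with
      map_smul' t a := by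
        ext p
        exact congr($(f.map_smul (MulOpposite.op t) p) a).symm }
  invFun g :=
    { AddMonoidHom.flip (g.toAddMonoidHom : A →+ P →+ AddCircle (1 : ℚ)) with
      map_smul' t p := by
        ext a
        exact congr($(g.map_smul t.unop a) p).symm }

instance injective_characterModule_of_projective (A : Type v) [AddCommGroup A] [Module T A]
    [Module.Projective T A] : Module.Injective Tᵐᵒᵖ (CharacterModule A) where
  out _ _ _ _ _ _ f hf g := by
    obtain ⟨h, hh⟩ := Module.projective_lifting_property (characterMapOfRight f) (characterFlip g)
      (characterMapOfRight_surjective hf)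
    exact ⟨characterFlip.symm h, fun x => DFunLike.ext _ _ fun a => congr($hh a x)⟩

variable (T P) in
/-- The canonical map from a right module to its double character module. -/
def characterEval : P →ₗ[Tᵐᵒᵖ] CharacterModule (CharacterModule P) :=
  characterFlip.symm LinearMap.id

theorem characterEval_injective : Function.Injective (characterEval T P) := by
  refine (injective_iff_map_eq_zero _).2 fun p hp => ?_
  exact CharacterModule.eq_zero_of_character_apply fun χ => congr($hp χ)

end CharacterModule

section BalancedTensor

variable {T : Type} [Ring T] {P A : Type} [AddCommGroup P] [Module Tᵐᵒᵖ P] [AddCommGroup A]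
  [Module T A]

variable (T P A) in
/-- The canonical biadditive map `(a, p) ↦ p ⊗ a`. -/
def balMk : A →+ P →+ Bal T P A :=
  AddMonoidHom.mk' (fun a => (balRel T P A).mkQ.toAddMonoidHom.comp
    (TensorProduct.mk ℤ A P a).toAddMonoidHom) fun a b => by
      ext p
      exact congrArg (balRel T P A).mkQ (TensorProduct.add_tmul a b p)

theorem balMk_smul (t : T) (a : A) (p : P) :
    balMk T P A (t • a) p = balMk T P A a (MulOpposite.op t • p) :=
  (Submodule.Quotient.eq (balRel T P A)).2 (Submodule.subset_span ⟨t, a, p, rfl⟩)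

theorem bal_hom_ext {G : Type*} [AddCommGroup G] {φ ψ : Bal T P A →+ G}
    (h : ∀ a p, φ (balMk T P A a p) = ψ (balMk T P A a p)) : φ = ψ := by
  have hmk : φ.toIntLinearMap ∘ₗ (balRel T P A).mkQ = ψ.toIntLinearMap ∘ₗ (balRel T P A).mkQ :=
    TensorProduct.ext' h
  exact congr($(Submodule.linearMap_qext _ hmk).toAddMonoidHom)

/-- The additive map on `P ⊗_T A` induced by a balanced biadditive map. -/
def balLift {G : Type*} [AddCommGroup G] (b : A →+ P →+ G)
    (hb : ∀ (t : T) a p, b (t • a) p = b a (MulOpposite.op t • p)) : Bal T P A →+ G :=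
  ((balRel T P A).liftQ (TensorProduct.liftAddHom b fun n a p => by simp).toIntLinearMap
    (Submodule.span_le.2 (by
      rintro _ ⟨t, a, p, rfl⟩
      exact (map_sub _ _ _).trans (sub_eq_zero.2 (hb t a p))))).toAddMonoidHom

/-- Tensor-hom adjunction for characters: `(P ⊗_T A)⋆ ≃ Hom_T(P, A⋆)`. -/
def balCharacterEquiv : CharacterModule (Bal T P A) ≃+ (P →ₗ[Tᵐᵒᵖ] CharacterModule A) where
  toFun χ :=
    { (AddMonoidHom.compHom (χ : Bal T P A →+ _)).comp (balMk T P A).flip with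
      map_smul' t p := by
        ext a
        exact congrArg χ (balMk_smul t.unop a p).symm }
  invFun g := balLift (AddMonoidHom.flip (g.toAddMonoidHom : P →+ A →+ AddCircle (1 : ℚ)))
    fun t a p => congr($(g.map_smul (MulOpposite.op t) p) a).symm
  left_inv _ := bal_hom_ext fun _ _ => rfl
  right_inv _ := rfl
  map_add' _ _ := rfl

theorem characterEval_isPureMonoRight : IsPureMonoRight T (characterEval T P) := by
  refine ⟨characterEval_injective, fun A _ _ => (injective_iff_map_eq_zero _).2 fun x hx => ?_⟩
  refine CharacterModule.eq_zero_of_character_apply fun χ => ?_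
  let ψ := balCharacterEquiv.symm (characterMap (characterFlip (balCharacterEquiv χ)))
  have hψ : ψ.comp (balMapRight T A (characterEval T P)).toAddMonoidHom = χ :=
    bal_hom_ext fun _ _ => rfl
  rw [← hψ]
  exact (congrArg ψ hx).trans (map_zero ψ)

theorem exists_retraction_characterEval (hP : PureInjectiveRight T P) :
    ∃ r : CharacterModule (CharacterModule P) →ₗ[Tᵐᵒᵖ] P, r ∘ₗ characterEval T P = LinearMap.id :=
  hP _ _ _ characterEval_isPureMonoRight LinearMap.id

theorem baer_characterModule_of_rightFlat (hP : RightFlat T P) :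
    Module.Baer T (CharacterModule P) := by
  intro I g
  obtain ⟨χ, hχ⟩ := CharacterModule.dual_surjective_of_injective
    (balMapLeft T P (Submodule.subtype I)) (hP _ _ _ I.subtype_injective)
    (balCharacterEquiv.symm (characterFlip.symm g))
  refine ⟨characterFlip (balCharacterEquiv χ), fun a ha => DFunLike.ext _ _ fun p => ?_⟩
  exact congr($hχ (balMk T P I ⟨a, ha⟩ p))

end BalancedTensor

section Flat

variable {T : Type} [Ring T] {P : Type} [AddCommGroup P] [Module Tᵐᵒᵖ P] (hP : RightFlat T P)
  {A B C : Type*} [AddCommGroup A] [Module T A] [AddCommGroup B] [Module T B] [AddCommGroup C]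
  [Module T C] {u : A →ₗ[T] B} {v : B →ₗ[T] C}

include hP

theorem exists_characterMap_comp_eq_of_exact (huv : Function.Exact u v)
    (g : P →ₗ[Tᵐᵒᵖ] CharacterModule B) (hg : characterMap u ∘ₗ g = 0) :
    ∃ h : P →ₗ[Tᵐᵒᵖ] CharacterModule C, characterMap v ∘ₗ h = g := by
  obtain ⟨h, hh⟩ := exists_comp_eq_of_exact_of_baer (baer_characterModule_of_rightFlat hP) huv
    (characterFlip g) (LinearMap.ext fun a => DFunLike.ext _ _ fun p => congr($hg p a))
  exact ⟨characterFlip.symm h, LinearMap.ext fun p => DFunLike.ext _ _ fun b => congr($hh b p)⟩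

variable {E : Type*} [AddCommGroup E] [Module Tᵐᵒᵖ E] {δ : CharacterModule A →ₗ[Tᵐᵒᵖ] E}

theorem exists_characterMap_comp_eq_of_comp_eq_zero (huδ : Function.Exact (characterMap u) δ)
    (g : P →ₗ[Tᵐᵒᵖ] CharacterModule A) (hg : δ ∘ₗ g = 0) :
    ∃ h : P →ₗ[Tᵐᵒᵖ] CharacterModule B, characterMap u ∘ₗ h = g := by
  refine exists_characterMap_comp_eq_of_exact hP (LinearMap.exact_subtype_ker_map u) g
    (LinearMap.ext fun p => ?_)
  exact (characterMap_exact (LinearMap.exact_subtype_ker_map u) _).2 ((huδ _).1 congr($hg p))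

theorem exists_comp_eq_of_characterMap_exact (huδ : Function.Exact (characterMap u) δ)
    (hδ : Function.Surjective δ) (g : P →ₗ[Tᵐᵒᵖ] E) :
    ∃ h : P →ₗ[Tᵐᵒᵖ] CharacterModule A, δ ∘ₗ h = g := by
  let ι := (LinearMap.ker u).subtype
  have hker : LinearMap.ker δ = LinearMap.ker (characterMap ι) := by
    rw [LinearMap.exact_iff.1 huδ,
      LinearMap.exact_iff.1 (characterMap_exact (LinearMap.exact_subtype_ker_map u))]
  have hι : Function.Injective ι := Submodule.subtype_injective _
  let e := linearEquivOfKerEq δ (characterMap ι) hδ (characterMap_surjective hι) hker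
  obtain ⟨h, hh⟩ := exists_characterMap_comp_eq_of_exact hP
    ((LinearMap.exact_zero_iff_injective PUnit ι).2 hι) (e ∘ₗ g)
    (LinearMap.ext fun _ => DFunLike.ext _ _ fun _ => map_zero _)
  refine ⟨h, LinearMap.ext fun p => e.injective ?_⟩
  exact (linearEquivOfKerEq_apply ..).trans congr($hh p)

end Flat

section ExtPrecomp

open Abelian

variable {T : Type} [Ring T] {A B C : Type} [AddCommGroup A] [Module T A] [AddCommGroup B]
  [Module T B] [AddCommGroup C] [Module T C] (Z : ModuleCat.{0} T) (j : ℕ)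

/-- The contravariant functoriality of `Ext^j(-, Z)` on linear maps, additively in the map. -/
def extPrecomp : (A →ₗ[T] B) →+ Ext (ModuleCat.of T B) Z j →+ Ext (ModuleCat.of T A) Z j :=
  AddMonoidHom.mk' (fun φ => (Ext.mk₀ (ModuleCat.ofHom φ)).precomp Z (zero_add j)) fun φ ψ => by
    ext e
    exact (congrArg (fun x => Ext.comp x e (zero_add j)) (Ext.mk₀_add _ _)).trans
      (Ext.add_comp _ _ _ _)

theorem extPrecomp_id (e : Ext (ModuleCat.of T A) Z j) : extPrecomp Z j LinearMap.id e = e :=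
  Ext.mk₀_id_comp e

theorem extPrecomp_comp (ψ : B →ₗ[T] C) (φ : A →ₗ[T] B) (e : Ext (ModuleCat.of T C) Z j) :
    extPrecomp Z j (ψ ∘ₗ φ) e = extPrecomp Z j φ (extPrecomp Z j ψ e) :=
  (Ext.mk₀_comp_mk₀_assoc _ _ e).symm

theorem comp_extPrecomp {Z Z' : ModuleCat.{0} T} {j k l : ℕ} (φ : A →ₗ[T] B)
    (e : Ext (ModuleCat.of T B) Z j) (x : Ext Z Z' k) (h : j + k = l) :
    (extPrecomp Z j φ e).comp x h = extPrecomp Z' l φ (e.comp x h) :=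
  Ext.comp_assoc _ _ _ (zero_add j) h (by lia)

variable {Z} in
/-- The identification of `Ext^0` with the group of linear maps. -/
def extZeroEquiv : (A →ₗ[T] Z) ≃+ Ext (ModuleCat.of T A) Z 0 :=
  (ModuleCat.homAddEquiv (M := ModuleCat.of T A) (N := Z)).symm.trans Ext.addEquiv₀.symm

theorem extPrecomp_extZeroEquiv (φ : A →ₗ[T] B) (ψ : B →ₗ[T] Z) :
    extPrecomp Z 0 φ (extZeroEquiv ψ) = extZeroEquiv (ψ ∘ₗ φ) :=
  Ext.mk₀_comp_mk₀ (ModuleCat.ofHom φ) (ModuleCat.ofHom ψ)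

theorem extZeroEquiv_comp_mk₀ (φ : A →ₗ[T] B) (ψ : B →ₗ[T] C) :
    (extZeroEquiv (Z := .of T B) φ).comp (Ext.mk₀ (ModuleCat.ofHom ψ)) (add_zero 0) =
      extZeroEquiv (Z := .of T C) (ψ ∘ₗ φ) :=
  Ext.mk₀_comp_mk₀ (ModuleCat.ofHom φ) (ModuleCat.ofHom ψ)

end ExtPrecomp

section Bimodule

variable {R S F Y : Type} [Ring R] [Ring S] [AddCommGroup F] [Module Rᵐᵒᵖ F] [AddCommGroup Y]
  [Module R Y] [Module Sᵐᵒᵖ Y]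

section TensorHom

variable {Z : Type*} [AddCommGroup Z] [Module Sᵐᵒᵖ Z]

variable (R S F Y) in
/-- The map `y ↦ f ⊗ y` from `Y` to `F ⊗_R Y`, additively in `f`. -/
def bimodMk : F →+ (Y →ₗ[Sᵐᵒᵖ] BimodTens R S F Y) :=
  AddMonoidHom.mk' (fun f =>
    (bimodRel R S F Y).mkQ ∘ₗ (TensorProduct.AlgebraTensorModule.mk ℤ Sᵐᵒᵖ Y F).flip f)
    fun f f' => LinearMap.ext fun y =>
      congrArg (bimodRel R S F Y).mkQ (TensorProduct.tmul_add y f f')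

theorem bimodTens_hom_ext {φ ψ : BimodTens R S F Y →ₗ[Sᵐᵒᵖ] Z}
    (h : ∀ f, φ ∘ₗ bimodMk R S F Y f = ψ ∘ₗ bimodMk R S F Y f) : φ = ψ := by
  refine Submodule.linearMap_qext _ (TensorProduct.AlgebraTensorModule.ext fun y f => ?_)
  exact congr($(h f) y)

variable [SMulCommClass R Sᵐᵒᵖ Y]

theorem bimodMk_op_smul (r : R) (f : F) :
    bimodMk R S F Y (MulOpposite.op r • f) = bimodMk R S F Y f ∘ₗ rmulY R S Y r :=
  LinearMap.ext fun y =>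
    ((Submodule.Quotient.eq (bimodRel R S F Y)).2 (Submodule.subset_span ⟨r, y, f, rfl⟩)).symm

/-- The map on `F ⊗_R Y` induced by an `R`-balanced additive family of maps on `Y`. -/
def bimodLift (g : F →+ (Y →ₗ[Sᵐᵒᵖ] Z))
    (hg : ∀ (r : R) f, g (MulOpposite.op r • f) = g f ∘ₗ rmulY R S Y r) :
    BimodTens R S F Y →ₗ[Sᵐᵒᵖ] Z :=
  (bimodRel R S F Y).liftQ (TensorProduct.AlgebraTensorModule.lift g.toIntLinearMap.flip)
    (Submodule.span_le.2 (by
      rintro _ ⟨r, y, f, rfl⟩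
      exact (map_sub _ _ _).trans (sub_eq_zero.2 congr($(hg r f) y).symm)))

theorem bimodLift_comp_bimodMk (g : F →+ (Y →ₗ[Sᵐᵒᵖ] Z))
    (hg : ∀ (r : R) f, g (MulOpposite.op r • f) = g f ∘ₗ rmulY R S Y r) (f : F) :
    bimodLift g hg ∘ₗ bimodMk R S F Y f = g f :=
  rfl

end TensorHom

variable [SMulCommClass R Sᵐᵒᵖ Y]

section BimoduleBal

variable {K Q : Type} [AddCommGroup K] [Module S K] [AddCommGroup Q] [Module S Q]

/-- The left action of `R` on `Y ⊗_S K` through the bimodule `Y`. -/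
instance : Module R (Bal S Y K) :=
  Module.compHom (Bal S Y K) (R := AddMonoid.End (Bal S Y K))
    { toFun r := (balMapRight S K (rmulY R S Y r)).toAddMonoidHom
      map_one' := bal_hom_ext fun a y => congrArg (balMk S Y K a) (one_smul R y)
      map_mul' r s := bal_hom_ext fun a y => congrArg (balMk S Y K a) (mul_smul r s y)
      map_zero' := bal_hom_ext fun a y =>
        (congrArg (balMk S Y K a) (zero_smul R y)).trans (map_zero _)
      map_add' r s := bal_hom_ext fun a y =>
        (congrArg (balMk S Y K a) (add_smul r s y)).trans (map_add _ _ _) }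

variable (R Y) in
/-- The map `balMapLeft`, linear over the ring acting on the left of the bimodule. -/
def balMapLeftLinear (i : K →ₗ[S] Q) : Bal S Y K →ₗ[R] Bal S Y Q where
  __ := balMapLeft S Y i
  map_smul' r x := by
    have h : (balMapLeft S Y i).toAddMonoidHom.comp (DistribSMul.toAddMonoidHom (Bal S Y K) r) =
        (DistribSMul.toAddMonoidHom (Bal S Y Q) r).comp (balMapLeft S Y i).toAddMonoidHom :=
      bal_hom_ext fun _ _ => rfl
    exact congr($h x)

end BimoduleBal

section Ext

open Abelian

variable {Z Z' : ModuleCat.{0} Sᵐᵒᵖ} {j k l : ℕ}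

/-- The right action of `R` on `Ext^j(Y, Z)` by precomposition with `y ↦ r • y`. -/
instance : Module Rᵐᵒᵖ (Ext (ModuleCat.of Sᵐᵒᵖ Y) Z j) :=
  Module.compHom (Ext (ModuleCat.of Sᵐᵒᵖ Y) Z j)
    (R := AddMonoid.End (Ext (ModuleCat.of Sᵐᵒᵖ Y) Z j))
    { toFun r := extPrecomp Z j (rmulY R S Y r.unop)
      map_one' := by
        have h : rmulY R S Y 1 = LinearMap.id := LinearMap.ext (one_smul R)
        ext e
        exact congr(extPrecomp Z j $h e).trans (extPrecomp_id Z j e)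
      map_mul' r s := by
        have h : rmulY R S Y (s.unop * r.unop) = rmulY R S Y s.unop ∘ₗ rmulY R S Y r.unop :=
          LinearMap.ext (mul_smul _ _)
        ext e
        exact congr(extPrecomp Z j $h e).trans (extPrecomp_comp Z j _ _ e)
      map_zero' := by
        have h : rmulY R S Y 0 = 0 := LinearMap.ext (zero_smul R)
        exact congr(extPrecomp Z j $h).trans (map_zero _)
      map_add' r s := by
        have h : rmulY R S Y (r.unop + s.unop) = rmulY R S Y r.unop + rmulY R S Y s.unop :=
          LinearMap.ext (add_smul _ _)
        exact congr(extPrecomp Z j $h).trans (map_add _ _ _) }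

theorem op_smul_ext (r : R) (e : Ext (ModuleCat.of Sᵐᵒᵖ Y) Z j) :
    MulOpposite.op r • e = extPrecomp Z j (rmulY R S Y r) e :=
  rfl

variable (R Y) in
/-- The map `Ext^j(Y, Z) → Ext^l(Y, Z')` given by Yoneda composition with a class in
`Ext^k(Z, Z')`, linear for the action of `R` through `Y`. -/
def extPostcomp (x : Ext Z Z' k) (h : j + k = l) :
    Ext (ModuleCat.of Sᵐᵒᵖ Y) Z j →ₗ[Rᵐᵒᵖ] Ext (ModuleCat.of Sᵐᵒᵖ Y) Z' l where
  __ := x.postcomp _ h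
  map_smul' r e := comp_extPrecomp (rmulY R S Y r.unop) e x h

variable (R F Y Z j) in
/-- The comparison map `Ext^j(F ⊗_R Y, Z) → Hom_R(F, Ext^j(Y, Z))`, which sends a class `e` to
the family of its restrictions along `y ↦ f ⊗ y`. -/
def tensorExtHom :
    Ext (ModuleCat.of Sᵐᵒᵖ (BimodTens R S F Y)) Z j →+
      (F →ₗ[Rᵐᵒᵖ] Ext (ModuleCat.of Sᵐᵒᵖ Y) Z j) where
  toFun e :=
    { (extPrecomp Z j).flip e |>.comp (bimodMk R S F Y) with
      map_smul' r f := congr(extPrecomp Z j $(bimodMk_op_smul r.unop f) e).trans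
        (extPrecomp_comp Z j _ _ e) }
  map_zero' := LinearMap.ext fun f => map_zero (extPrecomp Z j (bimodMk R S F Y f))
  map_add' e e' := LinearMap.ext fun f => map_add (extPrecomp Z j (bimodMk R S F Y f)) e e'

theorem tensorExtHom_comp (e : Ext (ModuleCat.of Sᵐᵒᵖ (BimodTens R S F Y)) Z j)
    (x : Ext Z Z' k) (h : j + k = l) :
    tensorExtHom R F Y Z' l (e.comp x h) = extPostcomp R Y x h ∘ₗ tensorExtHom R F Y Z j e :=
  LinearMap.ext fun f => (comp_extPrecomp (bimodMk R S F Y f) e x h).symm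

variable (R S F Y Z) in
theorem tensorExtHom_zero_bijective : Function.Bijective (tensorExtHom R F Y Z 0) := by
  have happly (φ : BimodTens R S F Y →ₗ[Sᵐᵒᵖ] Z) (f : F) :
      tensorExtHom R F Y Z 0 (extZeroEquiv φ) f = extZeroEquiv (φ ∘ₗ bimodMk R S F Y f) :=
    extPrecomp_extZeroEquiv Z (bimodMk R S F Y f) φ
  refine ⟨fun e e' h => ?_, fun g => ?_⟩
  · obtain ⟨φ, rfl⟩ := extZeroEquiv.surjective e
    obtain ⟨ψ, rfl⟩ := extZeroEquiv.surjective e'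
    refine congrArg extZeroEquiv (bimodTens_hom_ext fun f => extZeroEquiv.injective ?_)
    rw [← happly, h, happly]
  · let G : F →+ (Y →ₗ[Sᵐᵒᵖ] Z) := extZeroEquiv.symm.toAddMonoidHom.comp g.toAddMonoidHom
    have hG (f : F) : extZeroEquiv (G f) = g f := extZeroEquiv.apply_symm_apply _
    have hbal (r : R) (f : F) : G (MulOpposite.op r • f) = G f ∘ₗ rmulY R S Y r := by
      refine extZeroEquiv.injective ?_
      rw [hG, map_smul, ← hG, op_smul_ext, extPrecomp_extZeroEquiv]
    refine ⟨extZeroEquiv (bimodLift G hbal), LinearMap.ext fun f => ?_⟩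
    rw [happly, bimodLift_comp_bimodMk, hG]

section LongExactSequence

variable {C : ShortComplex (ModuleCat.{0} Sᵐᵒᵖ)} (hC : C.ShortExact)

theorem tensorExtHom_succ_surjective
    (hK : Function.Surjective (tensorExtHom R F Y C.X₃ j))
    (hlift : ∀ g : F →ₗ[Rᵐᵒᵖ] Ext (ModuleCat.of Sᵐᵒᵖ Y) C.X₁ (j + 1),
      ∃ h, extPostcomp R Y hC.extClass rfl ∘ₗ h = g) :
    Function.Surjective (tensorExtHom R F Y C.X₁ (j + 1)) := by
  intro g
  obtain ⟨h, rfl⟩ := hlift g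
  obtain ⟨e, rfl⟩ := hK h
  exact ⟨e.comp hC.extClass rfl, tensorExtHom_comp e hC.extClass rfl⟩

variable [Injective C.X₂]

theorem tensorExtHom_succ_injective
    (hQ : Function.Surjective (tensorExtHom R F Y C.X₂ j))
    (hK : Function.Injective (tensorExtHom R F Y C.X₃ j))
    (hlift : ∀ g : F →ₗ[Rᵐᵒᵖ] Ext (ModuleCat.of Sᵐᵒᵖ Y) C.X₃ j,
      extPostcomp R Y hC.extClass rfl ∘ₗ g = 0 →
        ∃ h, extPostcomp R Y (Ext.mk₀ C.g) (add_zero j) ∘ₗ h = g) :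
    Function.Injective (tensorExtHom R F Y C.X₁ (j + 1)) := by
  refine (injective_iff_map_eq_zero _).2 fun e he => ?_
  obtain ⟨e, rfl⟩ := Ext.covariant_sequence_exact₁ _ hC e (Ext.eq_zero_of_injective _) rfl
  obtain ⟨h, hh⟩ := hlift (tensorExtHom R F Y _ j e) ((tensorExtHom_comp e _ rfl).symm.trans he)
  obtain ⟨e', rfl⟩ := hQ h
  obtain rfl := hK ((tensorExtHom_comp e' (Ext.mk₀ C.g) (add_zero j)).trans hh)
  rw [Ext.comp_assoc_of_second_deg_zero, hC.comp_extClass, Ext.comp_zero]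

theorem extPostcomp_extClass_surjective :
    Function.Surjective (extPostcomp R Y hC.extClass (rfl : j + 1 = j + 1)) :=
  fun e => Ext.covariant_sequence_exact₁ _ hC e (Ext.eq_zero_of_injective _) rfl

theorem extPostcomp_extClass_injective :
    Function.Injective (extPostcomp R Y hC.extClass (rfl : j + 1 + 1 = j + 1 + 1)) := by
  refine (injective_iff_map_eq_zero _).2 fun e he => ?_
  obtain ⟨e, rfl⟩ := Ext.covariant_sequence_exact₃ _ hC e rfl he
  rw [Ext.eq_zero_of_injective e, Ext.zero_comp]

include hC in
theorem tensorExtHom_succ_succ_bijective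
    (hK : Function.Bijective (tensorExtHom R F Y C.X₃ (j + 1))) :
    Function.Bijective (tensorExtHom R F Y C.X₁ (j + 2)) := by
  let δ := LinearEquiv.ofBijective (extPostcomp R Y hC.extClass (rfl : j + 1 + 1 = j + 1 + 1))
    ⟨extPostcomp_extClass_injective hC, extPostcomp_extClass_surjective hC⟩
  refine ⟨tensorExtHom_succ_injective hC (fun g => ⟨0, ?_⟩) hK.1 fun g hg => ⟨0, ?_⟩,
    tensorExtHom_succ_surjective hC hK.2 fun g => ⟨δ.symm ∘ₗ g, ?_⟩⟩
  · exact LinearMap.ext fun f => (Ext.eq_zero_of_injective _).trans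
      (Ext.eq_zero_of_injective (g f)).symm
  · rw [LinearMap.comp_zero]
    exact LinearMap.ext fun f => δ.injective ((map_zero δ).trans congr($hg f).symm)
  · exact LinearMap.ext fun f => δ.apply_symm_apply (g f)

end LongExactSequence

section CharacterSequence

variable {K Q M : Type} [AddCommGroup K] [Module S K] [AddCommGroup Q] [Module S Q]
  [AddCommGroup M] [Module S M]

variable (R Y K) in
/-- The adjunction isomorphism `(Y ⊗_S K)⋆ ≃ Hom_S(Y, K⋆)`, with values in `Ext^0`. -/
def characterBalEquivExtZero : CharacterModule (Bal S Y K) ≃ₗ[Rᵐᵒᵖ]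
    Ext (ModuleCat.of Sᵐᵒᵖ Y) (ModuleCat.of Sᵐᵒᵖ (CharacterModule K)) 0 :=
  (balCharacterEquiv.trans (extZeroEquiv (Z := .of Sᵐᵒᵖ (CharacterModule K)))).toLinearEquiv
    fun r χ => (extPrecomp_extZeroEquiv (.of Sᵐᵒᵖ (CharacterModule K)) (rmulY R S Y r.unop)
      (balCharacterEquiv χ)).symm

variable {i : K →ₗ[S] Q} {p : Q →ₗ[S] M}

theorem characterBalEquivExtZero_characterMap (χ : CharacterModule (Bal S Y Q)) :
    characterBalEquivExtZero R Y K (characterMap (balMapLeftLinear R Y i) χ) =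
      extPostcomp R Y (Ext.mk₀ (ModuleCat.ofHom (characterMap i))) (add_zero 0)
        (characterBalEquivExtZero R Y Q χ) :=
  (extZeroEquiv_comp_mk₀ (balCharacterEquiv χ) (characterMap i)).symm

variable (hip : Function.Exact i p)

/-- The complex `M⋆ → Q⋆ → K⋆` of right modules dual to an exact sequence `K → Q → M`. -/
def characterShortComplex : ShortComplex (ModuleCat.{0} Sᵐᵒᵖ) where
  f := ModuleCat.ofHom (characterMap p)
  g := ModuleCat.ofHom (characterMap i)
  zero := ModuleCat.hom_ext (characterMap_exact hip).linearMap_comp_eq_zero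

theorem characterShortComplex_shortExact (hi : Function.Injective i)
    (hp : Function.Surjective p) : (characterShortComplex hip).ShortExact :=
  ModuleCat.shortComplex_shortExact _ (characterMap_exact hip) (characterMap_injective hp)
    (characterMap_surjective hi)

instance injective_characterShortComplex_X₂ [Module.Projective S Q] :
    Injective (characterShortComplex hip).X₂ :=
  Module.injective_object_of_injective_module Sᵐᵒᵖ (CharacterModule Q)

variable {hip} (hC : (characterShortComplex hip).ShortExact)

variable (R Y) in
/-- The connecting map `(Y ⊗_S K)⋆ → Ext^1(Y, M⋆)` of the dual of `0 → K → Q → M → 0`. -/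
def characterConnecting : CharacterModule (Bal S Y K) →ₗ[Rᵐᵒᵖ]
    Ext (ModuleCat.of Sᵐᵒᵖ Y) (ModuleCat.of Sᵐᵒᵖ (CharacterModule M)) 1 :=
  extPostcomp R Y hC.extClass (zero_add 1) ∘ₗ (characterBalEquivExtZero R Y K).toLinearMap

theorem exact_characterMap_characterConnecting :
    Function.Exact (characterMap (balMapLeftLinear R Y i)) (characterConnecting R Y hC) := by
  intro χ
  constructor
  · intro hχ
    obtain ⟨e, he⟩ := Ext.covariant_sequence_exact₃ _ hC _ (zero_add 1) hχ
    obtain ⟨ψ, rfl⟩ := (characterBalEquivExtZero R Y Q).surjective e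
    exact ⟨ψ, (characterBalEquivExtZero R Y K).injective
      ((characterBalEquivExtZero_characterMap ψ).trans he)⟩
  · rintro ⟨ψ, rfl⟩
    refine (congrArg (extPostcomp R Y hC.extClass (zero_add 1))
      (characterBalEquivExtZero_characterMap ψ)).trans ?_
    have hassoc := Ext.comp_assoc_of_second_deg_zero (characterBalEquivExtZero R Y Q ψ)
      (Ext.mk₀ (characterShortComplex hip).g) hC.extClass (zero_add 1)
    exact hassoc.trans ((congrArg (fun x => Ext.comp _ x _) hC.comp_extClass).trans
      (Ext.comp_zero _ _ _ _ _))

include hC in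
theorem tensorExtHom_one_bijective [Module.Projective S Q] (hF : RightFlat R F) :
    Function.Bijective (tensorExtHom R F Y (characterShortComplex hip).X₁ 1) := by
  have hexact := exact_characterMap_characterConnecting (R := R) (Y := Y) hC
  let εK := characterBalEquivExtZero (S := S) R Y K
  let εQ := characterBalEquivExtZero (S := S) R Y Q
  refine ⟨tensorExtHom_succ_injective hC (tensorExtHom_zero_bijective R S F Y _).2
    (tensorExtHom_zero_bijective R S F Y _).1 fun g hg => ?_,
    tensorExtHom_succ_surjective hC (tensorExtHom_zero_bijective R S F Y _).2 fun g => ?_⟩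
  · have hδg : characterConnecting R Y hC ∘ₗ (εK.symm.toLinearMap ∘ₗ g) = 0 :=
      LinearMap.ext fun f => (congrArg (extPostcomp R Y hC.extClass (zero_add 1))
        (εK.apply_symm_apply (g f))).trans (LinearMap.congr_fun hg f)
    obtain ⟨h, hh⟩ := exists_characterMap_comp_eq_of_comp_eq_zero hF hexact _ hδg
    refine ⟨εQ.toLinearMap ∘ₗ h, LinearMap.ext fun f => ?_⟩
    exact (characterBalEquivExtZero_characterMap (h f)).symm.trans
      ((congrArg εK congr($hh f)).trans (εK.apply_symm_apply (g f)))
  · have hsurj : Function.Surjective (characterConnecting R Y hC) :=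
      (extPostcomp_extClass_surjective (R := R) hC).comp εK.surjective
    obtain ⟨h, hh⟩ := exists_comp_eq_of_characterMap_exact hF hexact hsurj g
    exact ⟨εK.toLinearMap ∘ₗ h, hh⟩

end CharacterSequence

theorem tensorExtHom_characterModule_bijective (hF : RightFlat R F) (j : ℕ) (M : Type)
    [AddCommGroup M] [Module S M] : Function.Bijective
      (tensorExtHom R F Y (ModuleCat.of Sᵐᵒᵖ (CharacterModule M)) j) := by
  induction j generalizing M with
  | zero => exact tensorExtHom_zero_bijective R S F Y _
  | succ j ih =>
    let p := Finsupp.linearCombination S (id : M → M)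
    have hip := LinearMap.exact_subtype_ker_map p
    have hC := characterShortComplex_shortExact hip (Submodule.subtype_injective _)
      (Finsupp.linearCombination_id_surjective S M)
    cases j with
    | zero => exact (tensorExtHom_one_bijective (Y := Y) hC hF :)
    | succ j => exact (tensorExtHom_succ_succ_bijective hC (ih (LinearMap.ker p)) :)

theorem tensorExtHom_bijective_of_retract {i : Z ⟶ Z'} {p : Z' ⟶ Z} (hip : i ≫ p = 𝟙 Z)
    (h : Function.Bijective (tensorExtHom R F Y Z' j)) :
    Function.Bijective (tensorExtHom R F Y Z j) := by
  have hretract {X : ModuleCat.{0} Sᵐᵒᵖ} (e : Ext X Z j) :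
      (e.comp (Ext.mk₀ i) (add_zero j)).comp (Ext.mk₀ p) (add_zero j) = e := by
    rw [Ext.comp_assoc_of_third_deg_zero, Ext.mk₀_comp_mk₀, hip, Ext.comp_mk₀_id]
  refine ⟨fun e e' he => ?_, fun g => ?_⟩
  · have hi : e.comp (Ext.mk₀ i) (add_zero j) = e'.comp (Ext.mk₀ i) (add_zero j) :=
      h.1 (by rw [tensorExtHom_comp, tensorExtHom_comp, he])
    rw [← hretract e, hi, hretract]
  · obtain ⟨e, he⟩ := h.2 (extPostcomp R Y (Ext.mk₀ i) (add_zero j) ∘ₗ g)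
    refine ⟨e.comp (Ext.mk₀ p) (add_zero j), ?_⟩
    rw [tensorExtHom_comp, he]
    exact LinearMap.ext fun f => hretract (g f)

theorem tensorExtHom_bijective {N : Type} [AddCommGroup N] [Module Sᵐᵒᵖ N] (hF : RightFlat R F)
    (hN : PureInjectiveRight S N) (j : ℕ) :
    Function.Bijective (tensorExtHom R F Y (ModuleCat.of Sᵐᵒᵖ N) j) := by
  obtain ⟨r, hr⟩ := exists_retraction_characterEval hN
  exact tensorExtHom_bijective_of_retract
    (i := ModuleCat.ofHom (characterEval S N)) (p := ModuleCat.ofHom r) (ModuleCat.hom_ext hr)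
    (tensorExtHom_characterModule_bijective hF j (CharacterModule N))

end Ext

end Bimodule

section HomRExt

variable {R S F Y N : Type} [Ring R] [Ring S] [AddCommGroup F] [Module Rᵐᵒᵖ F] [AddCommGroup Y]
  [Module R Y] [Module Sᵐᵒᵖ Y] [SMulCommClass R Sᵐᵒᵖ Y] [AddCommGroup N] [Module Sᵐᵒᵖ N] {j : ℕ}

theorem extAddEquiv_extAct (r : R)
    (e : extGrp Sᵐᵒᵖ (ModuleCat.of Sᵐᵒᵖ Y) (ModuleCat.of Sᵐᵒᵖ N) j) :
    extAddEquiv ℤ (ModuleCat.of Sᵐᵒᵖ Y) (ModuleCat.of Sᵐᵒᵖ N) j (extAct R S Y N j r e) =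
      MulOpposite.op r • extAddEquiv ℤ (ModuleCat.of Sᵐᵒᵖ Y) (ModuleCat.of Sᵐᵒᵖ N) j e :=
  extAddEquiv_naturality _ j (ModuleCat.ofHom (rmulY R S Y r)) e

variable (R S F Y N j) in
/-- The group `homRExt`, written with the Yoneda groups `Abelian.Ext` and bundled linear maps. -/
def homRExtEquiv : homRExt R S F Y N j ≃+
    (F →ₗ[Rᵐᵒᵖ] Abelian.Ext (ModuleCat.of Sᵐᵒᵖ Y) (ModuleCat.of Sᵐᵒᵖ N) j) :=
  let ε := extAddEquiv ℤ (ModuleCat.of Sᵐᵒᵖ Y) (ModuleCat.of Sᵐᵒᵖ N) j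
  { toFun g :=
      { ε.toAddMonoidHom.comp g.1 with
        map_smul' r f := (congrArg ε (g.2 r.unop f)).trans (extAddEquiv_extAct r.unop (g.1 f)) }
    invFun h := ⟨ε.symm.toAddMonoidHom.comp h.toAddMonoidHom, fun r f => ε.injective <| by
      have hf : ε (ε.symm (h f)) = h f := ε.apply_symm_apply (h f)
      exact (ε.apply_symm_apply _).trans ((h.map_smul (MulOpposite.op r) f).trans
        ((congrArg (MulOpposite.op r • ·) hf).symm.trans (extAddEquiv_extAct r _).symm))⟩
    left_inv g := Subtype.ext (AddMonoidHom.ext fun f => ε.symm_apply_apply (g.1 f))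
    right_inv h := LinearMap.ext fun f => ε.apply_symm_apply (h f)
    map_add' g g' := LinearMap.ext fun f => map_add ε (g.1 f) (g'.1 f) }

end HomRExt

/-- if `F` is a flat right `R`-module, `Y` an `(R,S)`-bimodule and `N` a
pure-injective right `S`-module, then for every `j ≥ 0` there is an isomorphism of
abelian groups `Ext^j_S(F ⊗_R Y, N) ≅ Hom_R(F, Ext^j_S(Y, N))`. -/
theorem stmt0 (hF : RightFlat R F) (hN : PureInjectiveRight S N) (j : ℕ) :
    Nonempty
      (↥(extGrp Sᵐᵒᵖ (ModuleCat.of Sᵐᵒᵖ (BimodTens R S F Y)) (ModuleCat.of Sᵐᵒᵖ N) j) ≃+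
        ↥(homRExt R S F Y N j)) := by
  let W := ModuleCat.of Sᵐᵒᵖ (BimodTens R S F Y)
  let comparison := AddEquiv.ofBijective (tensorExtHom R F Y (ModuleCat.of Sᵐᵒᵖ N) j)
    (tensorExtHom_bijective hF hN j)
  exact ⟨(extAddEquiv ℤ W (ModuleCat.of Sᵐᵒᵖ N) j).trans
    (comparison.trans (homRExtEquiv R S F Y N j).symm)⟩

end Stmt0
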